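/- Let (P_A)_{A ⊊ N} be an equimarginal family of probability distributions on the proper subsets of N = {1,…,n}, and define Q = Σ_{B ⊊ N} (−1)^{n−|B|−1} 2^{|B|−n} P_B (with P_∅ ≡ the constant function 1). Then the P_A are the marginals of a single probability distribution P on {0,1}^n if and only if: (i) −2^{−n} ≤ Q(x) ≤ 1 − 2^{−n} for all x ∈ {0,1}^n, and (ii) for every subset A ⊆ N with an odd number of elements and all x ∈ {0,1}^n, 0 ≤ Q(x) + (κ_A Q)(x) ≤ 2. -/

import Mathlib

/-- Flip the coordinates of `x ∈ {0,1}ⁿ` indexed by `A`. -/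
def flipOn {n : ℕ} (A : Finset (Fin n)) (x : Fin n → Bool) : Fin n → Bool :=
  fun i => if i ∈ A then !(x i) else x i

/-- The bit-flip operator `κ_A`, the composite of the `κ_i` over `i ∈ A`:
`(κ_A f)(x) = f(x with coordinates in A flipped)`. -/
def kop {n : ℕ} (A : Finset (Fin n)) (f : (Fin n → Bool) → ℝ) : (Fin n → Bool) → ℝ :=
  fun x => f (flipOn A x)

/-- The operator `M_A`, the composite of the commuting operators
`(M_i f)(x) = f(x) + f(x with i-th coordinate flipped)` over `i ∈ A`;
equivalently `(M_A f)(x) = Σ_{B ⊆ A} f(x with coordinates in B flipped)`. -/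
def Mop {n : ℕ} (A : Finset (Fin n)) (f : (Fin n → Bool) → ℝ) : (Fin n → Bool) → ℝ :=
  fun x => ∑ B ∈ A.powerset, f (flipOn B x)

/-- A probability distribution on the subset `A ⊆ N` of the binary variables:
a nonnegative function on `{0,1}ⁿ`, constant in the coordinates outside `A`,
with `M_A P_A` the constant function 1. -/
def IsDistOn {n : ℕ} (A : Finset (Fin n)) (f : (Fin n → Bool) → ℝ) : Prop :=
  (∀ x, 0 ≤ f x) ∧ (∀ i, i ∉ A → kop {i} f = f) ∧ Mop A f = fun _ => (1 : ℝ)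

/-- A family `(P_A)_{A ⊊ N}` of distributions on the proper subsets of `N` is
equimarginal if `M_{B∖A} P_B = M_{C∖A} P_C` whenever `A ⊆ B ∩ C` with `B, C ⊊ N`. -/
def Equimarginal {n : ℕ} (P : Finset (Fin n) → (Fin n → Bool) → ℝ) : Prop :=
  ∀ A B C : Finset (Fin n), B ⊂ Finset.univ → C ⊂ Finset.univ → A ⊆ B → A ⊆ C →
    Mop (B \ A) (P B) = Mop (C \ A) (P C)

/-- The sign function `σ_A(x) = Π_{i∈A} (-1)^{x_i}`. -/
def sigmaFn {n : ℕ} (A : Finset (Fin n)) (x : Fin n → Bool) : ℝ :=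
  ∏ i ∈ A, (if x i then (-1 : ℝ) else 1)

/-! Each `M_i` kills the parity character `σ = σ_N`, and conversely a function killed by every `M_i`
is a multiple of `σ`. In `M_i Q` the terms of `B` and `B ∪ {i}` cancel unless `B = N ∖ {i}`, which
leaves `M_i Q = P_{N∖{i}}`; so the functions whose marginals are the `P_A` are exactly the
`Q + c σ`. Nonnegativity of `Q + c σ` bounds `c` below by `-Q(x)` at the even points `x` and above
by `Q(y)` at the odd points `y`, so a suitable `c` exists iff `Q(x) + Q(y) ≥ 0` whenever the
parities of `x` and `y` differ. Since every `P_B` is orthogonal to `σ`, so is `Q`; hence `c` is the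
mean of `σ R` for a solution `R`, and this yields the remaining bounds on `Q`. -/

section

open Finset

lemma sum_ssubsets_insert {ι M : Type*} [DecidableEq ι] [AddCancelCommMonoid M]
    {s : Finset ι} {i : ι} (hi : i ∉ s) (g : Finset ι → M) :
    ∑ B ∈ (insert i s).ssubsets, g B = g s + ∑ B ∈ s.ssubsets, (g B + g (insert i B)) := by
  have hpowerset := sum_powerset_insert hi g
  rw [← sum_add_distrib, ← sum_erase_add _ _ (mem_powerset_self s),
    ← sum_erase_add _ _ (mem_powerset_self (insert i s)), ← add_assoc] at hpowerset
  rw [add_comm (g s)]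
  exact add_right_cancel hpowerset

lemma compl_singleton_ssubset_univ {ι : Type*} [Fintype ι] [DecidableEq ι] (i : ι) :
    ({i}ᶜ : Finset ι) ⊂ univ := by
  simp [ssubset_univ_iff]

lemma insert_ssubset_univ_of_ssubset_compl_singleton {ι : Type*} [Fintype ι] [DecidableEq ι]
    {i : ι} {B : Finset ι} (hB : B ⊂ {i}ᶜ) : insert i B ⊂ univ := by
  have hi : i ∉ B := notMem_mono hB.1 (by simp)
  refine ssubset_univ_iff.2 fun h => hB.ne ?_
  rw [← erase_insert hi, h, erase_eq, compl_eq_univ_sdiff]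

variable {n : ℕ}

lemma flipOn_empty (x : Fin n → Bool) : flipOn ∅ x = x := by
  funext i
  simp [flipOn]

lemma flipOn_insert {B : Finset (Fin n)} {i : Fin n} (hi : i ∉ B) (x : Fin n → Bool) :
    flipOn (insert i B) x = flipOn {i} (flipOn B x) := by
  funext j
  by_cases h : j = i
  · subst h
    simp [flipOn, hi]
  · simp [flipOn, h]

lemma flipOn_involutive (A : Finset (Fin n)) : Function.Involutive (flipOn A) := by
  intro x
  funext i
  by_cases h : i ∈ A <;> simp [flipOn, h]

lemma flipOn_bijective (x : Fin n → Bool) :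
    Function.Bijective fun A : Finset (Fin n) => flipOn A x := by
  refine ⟨fun A B hAB => ?_, fun y => ⟨univ.filter fun i => x i ≠ y i, ?_⟩⟩
  · ext i
    have := congrFun hAB i
    by_cases hA : i ∈ A <;> by_cases hB : i ∈ B <;> simp_all [flipOn]
  · funext i
    cases hx : x i <;> cases hy : y i <;> simp [flipOn, hx, hy]

lemma Mop_empty (f : (Fin n → Bool) → ℝ) : Mop ∅ f = f := by
  funext x
  simp [Mop, flipOn_empty]

lemma Mop_singleton_apply (i : Fin n) (f : (Fin n → Bool) → ℝ) (x : Fin n → Bool) :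
    Mop {i} f x = f x + f (flipOn {i} x) := by
  calc Mop {i} f x = ∑ B ∈ (insert i (∅ : Finset (Fin n))).powerset, f (flipOn B x) := by
        rw [insert_empty_eq, Mop]
    _ = f x + f (flipOn {i} x) := by
        rw [sum_powerset_insert (notMem_empty i), powerset_empty, sum_singleton, sum_singleton,
          flipOn_empty, insert_empty_eq]

lemma Mop_singleton_apply_of_kop_eq {i : Fin n} {f : (Fin n → Bool) → ℝ} (hf : kop {i} f = f)
    (x : Fin n → Bool) : Mop {i} f x = 2 * f x := by
  have hflip : f (flipOn {i} x) = f x := congrFun hf x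
  rw [Mop_singleton_apply, hflip, two_mul]

lemma Mop_insert {S : Finset (Fin n)} {i : Fin n} (hi : i ∉ S) (f : (Fin n → Bool) → ℝ) :
    Mop (insert i S) f = Mop S (Mop {i} f) := by
  funext x
  calc Mop (insert i S) f x
      = ∑ B ∈ S.powerset, (f (flipOn B x) + f (flipOn (insert i B) x)) := by
        rw [Mop, sum_powerset_insert hi, sum_add_distrib]
    _ = ∑ B ∈ S.powerset, Mop {i} f (flipOn B x) := by
        refine sum_congr rfl fun B hB => ?_
        rw [Mop_singleton_apply, flipOn_insert (notMem_mono (mem_powerset.1 hB) hi)]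

lemma Mop_univ_apply (f : (Fin n → Bool) → ℝ) (x : Fin n → Bool) : Mop univ f x = ∑ y, f y := by
  rw [Mop, powerset_univ]
  exact (flipOn_bijective x).sum_comp f

lemma sigmaFn_flipOn (S A : Finset (Fin n)) (x : Fin n → Bool) :
    sigmaFn S (flipOn A x) = (-1) ^ #(S ∩ A) * sigmaFn S x := by
  have hcard : (-1 : ℝ) ^ #(S ∩ A) = ∏ i ∈ S, if i ∈ A then -1 else 1 := by
    rw [prod_ite_mem, prod_const]
  rw [hcard, sigmaFn, sigmaFn, ← prod_mul_distrib]
  refine prod_congr rfl fun i _ => ?_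
  by_cases hi : i ∈ A <;> cases hx : x i <;> simp [flipOn, hi, hx]

lemma sigmaFn_flipOn_of_odd {A : Finset (Fin n)} (hA : Odd #A) (x : Fin n → Bool) :
    sigmaFn univ (flipOn A x) = -sigmaFn univ x := by
  rw [sigmaFn_flipOn, univ_inter, hA.neg_one_pow, neg_one_mul]

lemma sigmaFn_eq_one_or_neg_one (A : Finset (Fin n)) (x : Fin n → Bool) :
    sigmaFn A x = 1 ∨ sigmaFn A x = -1 := by
  refine prod_induction _ (fun a : ℝ => a = 1 ∨ a = -1) ?_ (Or.inl rfl) fun i _ => ?_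
  · rintro _ _ (rfl | rfl) (rfl | rfl) <;> simp
  · cases x i <;> simp

lemma sigmaFn_mul_self (A : Finset (Fin n)) (x : Fin n → Bool) :
    sigmaFn A x * sigmaFn A x = 1 := by
  rcases sigmaFn_eq_one_or_neg_one A x with h | h <;> simp [h]

lemma abs_sigmaFn (A : Finset (Fin n)) (x : Fin n → Bool) : |sigmaFn A x| = 1 := by
  rcases sigmaFn_eq_one_or_neg_one A x with h | h <;> simp [h]

lemma exists_odd_flipOn_eq {x y : Fin n → Bool} (hxy : sigmaFn univ x ≠ sigmaFn univ y) :
    ∃ A : Finset (Fin n), Odd #A ∧ flipOn A x = y := by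
  obtain ⟨A, rfl⟩ := (flipOn_bijective x).2 y
  refine ⟨A, Nat.not_even_iff_odd.1 fun heven => hxy ?_, rfl⟩
  rw [sigmaFn_flipOn, univ_inter, heven.neg_one_pow, one_mul]

lemma Mop_singleton_add_mul_sigmaFn (i : Fin n) (f : (Fin n → Bool) → ℝ) (c : ℝ) :
    Mop {i} (fun x => f x + c * sigmaFn univ x) = Mop {i} f := by
  funext x
  rw [Mop_singleton_apply, Mop_singleton_apply, sigmaFn_flipOn_of_odd (by simp)]
  ring

lemma exists_eq_mul_sigmaFn {f : (Fin n → Bool) → ℝ} (hf : ∀ i, Mop {i} f = 0) :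
    ∃ c, ∀ x, f x = c * sigmaFn univ x := by
  have hflip (A : Finset (Fin n)) (x) : f (flipOn A x) = (-1) ^ #A * f x := by
    induction A using Finset.induction_on with
    | empty => simp [flipOn_empty]
    | insert i A hi ih =>
      have hsum : f (flipOn A x) + f (flipOn {i} (flipOn A x)) = 0 := by
        rw [← Mop_singleton_apply, hf, Pi.zero_apply]
      rw [flipOn_insert hi, card_insert_of_notMem hi, pow_succ]
      linarith
  let x₀ : Fin n → Bool := fun _ => false
  refine ⟨f x₀ * sigmaFn univ x₀, fun x => ?_⟩
  obtain ⟨A, rfl⟩ := (flipOn_bijective x₀).2 x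
  calc f (flipOn A x₀) = (-1) ^ #A * f x₀ * (sigmaFn univ x₀ * sigmaFn univ x₀) := by
        rw [hflip, sigmaFn_mul_self, mul_one]
    _ = f x₀ * sigmaFn univ x₀ * sigmaFn univ (flipOn A x₀) := by
        rw [sigmaFn_flipOn, univ_inter]
        ring

lemma sum_sigmaFn_mul_eq_zero {i : Fin n} {f : (Fin n → Bool) → ℝ} (hf : kop {i} f = f) :
    ∑ x, sigmaFn univ x * f x = 0 := by
  have hneg : ∑ x, sigmaFn univ x * f x = -∑ x, sigmaFn univ x * f x :=
    calc ∑ x, sigmaFn univ x * f x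
        = ∑ x, sigmaFn univ (flipOn {i} x) * kop {i} f x :=
          ((flipOn_involutive {i}).bijective.sum_comp fun x => sigmaFn univ x * f x).symm
      _ = -∑ x, sigmaFn univ x * f x := by
          simp only [hf, sigmaFn_flipOn_of_odd (card_singleton i ▸ odd_one), neg_mul,
            sum_neg_distrib]
  linarith

lemma exists_add_mul_sigmaFn_nonneg {f : (Fin n → Bool) → ℝ}
    (hf : ∀ A : Finset (Fin n), Odd #A → ∀ x, 0 ≤ f x + kop A f x) :
    ∃ c, ∀ x, 0 ≤ f x + c * sigmaFn univ x := by
  obtain ⟨x₀, hx₀, hmin⟩ := exists_min_image {x : Fin n → Bool | sigmaFn univ x = 1} f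
    ⟨fun _ => false, (mem_filter_univ _).2 (by simp [sigmaFn])⟩
  simp only [mem_filter_univ] at hx₀ hmin
  refine ⟨-f x₀, fun x => ?_⟩
  rcases sigmaFn_eq_one_or_neg_one univ x with heven | hodd
  · rw [heven]
    linarith [hmin x heven]
  · obtain ⟨A, hA, rfl⟩ : ∃ A : Finset (Fin n), Odd #A ∧ flipOn A x₀ = x :=
      exists_odd_flipOn_eq (by rw [hx₀, hodd]; norm_num)
    have hpair : 0 ≤ f x₀ + f (flipOn A x₀) := hf A hA x₀
    rw [hodd]
    linarith

/-- A signed distribution on `A`: the conditions of `IsDistOn` except nonnegativity. -/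
def IsSignedDistOn (A : Finset (Fin n)) (f : (Fin n → Bool) → ℝ) : Prop :=
  (∀ i, i ∉ A → kop {i} f = f) ∧ Mop A f = fun _ => (1 : ℝ)

/-- The members of the family `P` on proper subsets of `N` are the marginals of `R`. -/
def HasMarginals (R : (Fin n → Bool) → ℝ) (P : Finset (Fin n) → (Fin n → Bool) → ℝ) : Prop :=
  ∀ A : Finset (Fin n), A ⊂ univ → Mop (univ \ A) R = P A

/-- The coefficient `(-1)^(n-k-1) 2^(k-n)` of `P_B`, `|B| = k`, in `Q`. It is meant for `k < n`
only, where the subtractions do not truncate. -/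
noncomputable def alternatingCoeff (n k : ℕ) : ℝ :=
  (-1) ^ (n - k - 1) * (2 ^ k / 2 ^ n)

/-- The function `Q` of the theorem, as a function of the family `P`. -/
noncomputable def alternatingSum (P : Finset (Fin n) → (Fin n → Bool) → ℝ) (x : Fin n → Bool) : ℝ :=
  ∑ B ∈ (univ : Finset (Fin n)).ssubsets, alternatingCoeff n #B * P B x

lemma alternatingCoeff_succ {k : ℕ} (hk : k + 1 < n) :
    alternatingCoeff n (k + 1) = -2 * alternatingCoeff n k := by
  have hexp : n - k - 1 = n - (k + 1) - 1 + 1 := by omega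
  rw [alternatingCoeff, alternatingCoeff, hexp]
  ring

lemma two_mul_alternatingCoeff_self (k : ℕ) : 2 * alternatingCoeff (k + 1) k = 1 := by
  rw [alternatingCoeff, Nat.add_sub_cancel_left, Nat.sub_self, pow_succ]
  field_simp

variable {P : Finset (Fin n) → (Fin n → Bool) → ℝ} {R : (Fin n → Bool) → ℝ}

lemma Equimarginal.Mop_sdiff (hP : Equimarginal P) {A B : Finset (Fin n)} (hB : B ⊂ univ)
    (hAB : A ⊆ B) : Mop (B \ A) (P B) = P A := by
  rw [hP A B A hB (hAB.trans_ssubset hB) hAB Subset.rfl, sdiff_self, bot_eq_empty, Mop_empty]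

lemma alternatingCoeff_mul_Mop_add_insert (hinv : ∀ A ⊂ univ, ∀ i ∉ A, kop {i} (P A) = P A)
    (hP : Equimarginal P) {i : Fin n} {B : Finset (Fin n)} (hB : B ⊂ {i}ᶜ) (x : Fin n → Bool) :
    alternatingCoeff n #B * Mop {i} (P B) x
      + alternatingCoeff n #(insert i B) * Mop {i} (P (insert i B)) x = 0 := by
  have hi : i ∉ B := notMem_mono hB.1 (by simp)
  have hins : insert i B ⊂ univ := insert_ssubset_univ_of_ssubset_compl_singleton hB
  have hMop : Mop {i} (P (insert i B)) = P B := by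
    rw [← hP.Mop_sdiff hins (subset_insert i B), insert_sdiff_cancel hi]
  have hcard : #B + 1 < n := by
    simpa [card_insert_of_notMem hi] using card_lt_card hins
  rw [Mop_singleton_apply_of_kop_eq (hinv B ((subset_insert i B).trans_ssubset hins) i hi), hMop,
    card_insert_of_notMem hi, alternatingCoeff_succ hcard]
  ring

lemma Mop_singleton_alternatingSum (hinv : ∀ A ⊂ univ, ∀ i ∉ A, kop {i} (P A) = P A)
    (hP : Equimarginal P) (i : Fin n) : Mop {i} (alternatingSum P) = P {i}ᶜ := by
  have hi : i ∉ ({i}ᶜ : Finset (Fin n)) := by simp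
  have hcoeff : alternatingCoeff n #({i}ᶜ : Finset (Fin n)) * 2 = 1 := by
    obtain ⟨k, rfl⟩ := Nat.exists_eq_add_one.2 i.pos
    simpa [card_compl, mul_comm] using two_mul_alternatingCoeff_self k
  funext x
  calc Mop {i} (alternatingSum P) x
      = ∑ B ∈ (insert i ({i}ᶜ : Finset (Fin n))).ssubsets,
          alternatingCoeff n #B * Mop {i} (P B) x := by
        simp only [Mop_singleton_apply, alternatingSum, mul_add, sum_add_distrib,
          insert_compl_self]
    _ = alternatingCoeff n #({i}ᶜ : Finset (Fin n)) * Mop {i} (P {i}ᶜ) x := by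
        rw [sum_ssubsets_insert hi, sum_eq_zero fun B hB =>
          alternatingCoeff_mul_Mop_add_insert hinv hP (mem_ssubsets.1 hB) x, add_zero]
    _ = P {i}ᶜ x := by
        rw [Mop_singleton_apply_of_kop_eq (hinv _ (compl_singleton_ssubset_univ i) i hi),
          ← mul_assoc, hcoeff, one_mul]

lemma sum_sigmaFn_mul_alternatingSum (hinv : ∀ A ⊂ univ, ∀ i ∉ A, kop {i} (P A) = P A) :
    ∑ x, sigmaFn univ x * alternatingSum P x = 0 := by
  simp only [alternatingSum, mul_sum]
  rw [sum_comm]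
  refine sum_eq_zero fun B hB => ?_
  obtain ⟨i, -, hi⟩ := exists_of_ssubset (mem_ssubsets.1 hB)
  simp only [mul_left_comm, ← mul_sum,
    sum_sigmaFn_mul_eq_zero (hinv B (mem_ssubsets.1 hB) i hi), mul_zero]

lemma hasMarginals_iff_forall_compl_singleton (hP : Equimarginal P) :
    HasMarginals R P ↔ ∀ i, Mop {i} R = P {i}ᶜ := by
  refine ⟨fun h i => ?_, fun h A hA => ?_⟩
  · rw [← h _ (compl_singleton_ssubset_univ i), ← compl_eq_univ_sdiff, compl_compl]
  · obtain ⟨i, -, hi⟩ := exists_of_ssubset hA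
    have hA_compl : A ⊆ {i}ᶜ := subset_compl_singleton.2 hi
    rw [← insert_compl_self i, insert_sdiff_of_notMem _ hi, Mop_insert (by simp), h,
      hP.Mop_sdiff (compl_singleton_ssubset_univ i) hA_compl]

lemma hasMarginals_iff_exists_eq_add_mul_sigmaFn
    (hinv : ∀ A ⊂ univ, ∀ i ∉ A, kop {i} (P A) = P A) (hP : Equimarginal P) :
    HasMarginals R P ↔ ∃ c, ∀ x, R x = alternatingSum P x + c * sigmaFn univ x := by
  simp only [hasMarginals_iff_forall_compl_singleton hP,
    ← Mop_singleton_alternatingSum hinv hP]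
  constructor
  · intro h
    have hzero (i : Fin n) : Mop {i} (fun x => R x - alternatingSum P x) = 0 := by
      funext x
      have hx := congrFun (h i) x
      simp only [Mop_singleton_apply] at hx
      rw [Mop_singleton_apply, Pi.zero_apply]
      linarith
    obtain ⟨c, hc⟩ := exists_eq_mul_sigmaFn hzero
    exact ⟨c, fun x => by rw [← hc, add_sub_cancel]⟩
  · rintro ⟨c, hc⟩ i
    rw [funext hc]
    exact Mop_singleton_add_mul_sigmaFn i _ c

lemma IsDistOn.sum_eq_one (hR : IsDistOn univ R) : ∑ x, R x = 1 := by
  rw [← Mop_univ_apply R fun _ => false, hR.2.2]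

lemma IsDistOn.le_one (hR : IsDistOn univ R) (x : Fin n → Bool) : R x ≤ 1 :=
  hR.sum_eq_one ▸ single_le_sum (fun y _ => hR.1 y) (mem_univ x)

lemma IsDistOn.abs_sigmaFn_mul_sum_sub_le (hR : IsDistOn univ R) (x : Fin n → Bool) :
    |sigmaFn univ x * ∑ y, sigmaFn univ y * R y - R x| ≤ 1 - R x :=
  calc |sigmaFn univ x * ∑ y, sigmaFn univ y * R y - R x|
      = |∑ y ∈ univ.erase x, sigmaFn univ x * sigmaFn univ y * R y| := by
        rw [sum_erase_eq_sub (mem_univ x), sigmaFn_mul_self, one_mul, mul_sum]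
        simp only [mul_assoc]
    _ ≤ ∑ y ∈ univ.erase x, |sigmaFn univ x * sigmaFn univ y * R y| := abs_sum_le_sum_abs _ _
    _ = ∑ y ∈ univ.erase x, R y := by
        simp only [abs_mul, abs_sigmaFn, one_mul, abs_of_nonneg (hR.1 _)]
    _ = 1 - R x := by rw [sum_erase_eq_sub (mem_univ x), hR.sum_eq_one]

lemma sum_sigmaFn_mul_of_eq_alternatingSum_add
    (hinv : ∀ A ⊂ univ, ∀ i ∉ A, kop {i} (P A) = P A) {c : ℝ}
    (hR : ∀ x, R x = alternatingSum P x + c * sigmaFn univ x) :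
    ∑ x, sigmaFn univ x * R x = 2 ^ n * c := by
  calc ∑ x, sigmaFn univ x * R x
      = ∑ x, (sigmaFn univ x * alternatingSum P x + c * (sigmaFn univ x * sigmaFn univ x)) := by
        refine sum_congr rfl fun x _ => ?_
        rw [hR]
        ring
    _ = 2 ^ n * c := by
        simp [sum_add_distrib, sum_sigmaFn_mul_alternatingSum hinv, sigmaFn_mul_self]

lemma alternatingSum_mem_Icc (hinv : ∀ A ⊂ univ, ∀ i ∉ A, kop {i} (P A) = P A)
    (hR : IsDistOn univ R) {c : ℝ} (hc : ∀ x, R x = alternatingSum P x + c * sigmaFn univ x)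
    (x : Fin n → Bool) : alternatingSum P x ∈ Set.Icc (-(1 / 2 ^ n)) (1 - 1 / 2 ^ n : ℝ) := by
  set t := c * sigmaFn univ x
  have hmean : |2 ^ n * t - R x| ≤ 1 - R x := by
    have h := hR.abs_sigmaFn_mul_sum_sub_le x
    rwa [sum_sigmaFn_mul_of_eq_alternatingSum_add hinv hc, mul_comm, mul_assoc] at h
  obtain ⟨hlower, hupper⟩ := abs_le.1 hmean
  have hQ : alternatingSum P x = R x - t := by rw [hc, add_sub_cancel_right]
  rw [hQ]
  constructor
  · have ht_le : t ≤ 1 / 2 ^ n := by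
      rw [le_div_iff₀' (by positivity)]
      linarith
    linarith [hR.1 x]
  · have ht_ge : (2 * R x - 1) / 2 ^ n ≤ t := by
      rw [div_le_iff₀' (by positivity)]
      linarith
    have hgap : 0 ≤ (1 - R x) * (1 - 2 / 2 ^ n) := by
      obtain rfl | hn := n.eq_zero_or_pos
      · rw [← hR.sum_eq_one, Fintype.sum_subsingleton R x, sub_self, zero_mul]
      · refine mul_nonneg (sub_nonneg.2 (hR.le_one x)) (sub_nonneg.2 ?_)
        exact div_le_one_of_le₀ (le_self_pow₀ one_le_two hn.ne') (by positivity)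
    have hexpand : (1 - R x) * (1 - 2 / 2 ^ n) = 1 - 1 / 2 ^ n - (R x - (2 * R x - 1) / 2 ^ n) := by
      ring
    linarith

lemma alternatingSum_add_kop_eq {c : ℝ}
    (hc : ∀ x, R x = alternatingSum P x + c * sigmaFn univ x) {A : Finset (Fin n)} (hA : Odd #A)
    (x : Fin n → Bool) :
    alternatingSum P x + kop A (alternatingSum P) x = R x + R (flipOn A x) := by
  rw [hc, hc, kop, sigmaFn_flipOn_of_odd hA]
  ring

lemma exists_isDistOn_hasMarginals (hdist : ∀ A ⊂ univ, IsSignedDistOn A (P A))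
    (hP : Equimarginal P)
    (hodd : ∀ A : Finset (Fin n), Odd #A → ∀ x,
      0 ≤ alternatingSum P x + kop A (alternatingSum P) x) :
    ∃ R, IsDistOn univ R ∧ HasMarginals R P := by
  obtain rfl | hn := n.eq_zero_or_pos
  · refine ⟨fun _ => 1, ⟨fun _ => zero_le_one, fun i => i.elim0, ?_⟩, fun A hA => ?_⟩
    · funext x
      rw [Mop_univ_apply, Fintype.sum_subsingleton _ x]
    · exact absurd (Subsingleton.elim A univ) hA.ne
  · obtain ⟨c, hnonneg⟩ := exists_add_mul_sigmaFn_nonneg hodd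
    let R : (Fin n → Bool) → ℝ := fun x => alternatingSum P x + c * sigmaFn univ x
    have hmarg : HasMarginals R P :=
      (hasMarginals_iff_exists_eq_add_mul_sigmaFn (fun A hA => (hdist A hA).1) hP).2
        ⟨c, fun _ => rfl⟩
    have hempty : (∅ : Finset (Fin n)) ⊂ univ := empty_ssubset.2 ⟨⟨0, hn⟩, mem_univ _⟩
    have hone : Mop univ R = fun _ => 1 := by
      rw [← sdiff_empty (s := univ), hmarg ∅ hempty, ← (hdist ∅ hempty).2, Mop_empty]
    exact ⟨R, ⟨hnonneg, fun i hi => absurd (mem_univ i) hi, hone⟩, hmarg⟩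

theorem stmt_9_general (n : ℕ) (P : Finset (Fin n) → (Fin n → Bool) → ℝ)
    (hdist : ∀ A ⊂ univ, IsSignedDistOn A (P A))
    (hequi : Equimarginal P)
    (Q : (Fin n → Bool) → ℝ)
    (hQ : ∀ x, Q x = ∑ B ∈ univ.filter (fun B : Finset (Fin n) => B ⊂ univ),
        (-1 : ℝ) ^ (n - #B - 1) * (2 ^ #B / 2 ^ n) * P B x) :
    [∃ R, IsDistOn univ R ∧ HasMarginals R P,
      (∀ x, -(1 / 2 ^ n) ≤ Q x ∧ Q x ≤ 1 - 1 / 2 ^ n) ∧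
        ∀ A : Finset (Fin n), Odd #A → ∀ x, 0 ≤ Q x + kop A Q x ∧ Q x + kop A Q x ≤ 2,
      ∀ A : Finset (Fin n), Odd #A → ∀ x, 0 ≤ Q x + kop A Q x].TFAE := by
  have hssubsets : univ.filter (fun B : Finset (Fin n) => B ⊂ univ) = univ.ssubsets := by
    ext B
    rw [mem_filter_univ, mem_ssubsets]
  obtain rfl : Q = alternatingSum P := by
    funext x
    rw [hQ, hssubsets]
    rfl
  have hinv : ∀ A ⊂ univ, ∀ i ∉ A, kop {i} (P A) = P A := fun A hA => (hdist A hA).1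
  tfae_have 1 → 2 := by
    rintro ⟨R, hR, hmarg⟩
    obtain ⟨c, hc⟩ := (hasMarginals_iff_exists_eq_add_mul_sigmaFn hinv hequi).1 hmarg
    refine ⟨alternatingSum_mem_Icc hinv hR hc, fun A hA x => ?_⟩
    rw [alternatingSum_add_kop_eq hc hA]
    constructor <;> linarith [hR.1 x, hR.1 (flipOn A x), hR.le_one x, hR.le_one (flipOn A x)]
  tfae_have 2 → 3 := fun h A hA x => (h.2 A hA x).1
  tfae_have 3 → 1 := exists_isDistOn_hasMarginals hdist hequi
  tfae_finish

end

/-- Theorem 3 of the paper.  Let `(P_A)_{A ⊊ N}` be an equimarginal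
family of probability distributions on the proper subsets of `N = {1,…,n}` and let
`Q = Σ_{B ⊊ N} (-1)^{n-|B|-1} 2^{|B|-n} P_B`.  The `P_A` are the marginals of a single
probability distribution on `{0,1}ⁿ` if and only if
(i) `-2⁻ⁿ ≤ Q(x) ≤ 1 - 2⁻ⁿ` for all `x`, and
(ii) `0 ≤ Q(x) + (κ_A Q)(x) ≤ 2` for every odd subset `A ⊆ N` and all `x`. -/
theorem stmt_9 (n : ℕ) (P : Finset (Fin n) → (Fin n → Bool) → ℝ)
    (hdist : ∀ A : Finset (Fin n), A ⊂ Finset.univ → IsDistOn A (P A))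
    (hequi : Equimarginal P)
    (Q : (Fin n → Bool) → ℝ)
    (hQ : ∀ x, Q x = ∑ B ∈ Finset.univ.filter (fun B : Finset (Fin n) => B ⊂ Finset.univ),
        (-1 : ℝ) ^ (n - B.card - 1) * (2 ^ B.card / 2 ^ n) * P B x) :
    (∃ R : (Fin n → Bool) → ℝ, IsDistOn Finset.univ R ∧
        ∀ A : Finset (Fin n), A ⊂ Finset.univ → Mop (Finset.univ \ A) R = P A) ↔
      ((∀ x, -(1 / 2 ^ n) ≤ Q x ∧ Q x ≤ 1 - 1 / 2 ^ n) ∧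
       (∀ A : Finset (Fin n), Odd A.card → ∀ x,
          0 ≤ Q x + kop A Q x ∧ Q x + kop A Q x ≤ 2)) :=
  (stmt_9_general n P (fun A hA => (hdist A hA).2) hequi Q hQ).out 0 1
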